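/- For every multi-level apportionment instance, every non-negative integer h, and every tie-breaking, the allocation of h seats produced by the multi-level Jefferson's method fulfills lower quota. Moreover, the method satisfies house monotonicity: when the total number of seats increases from h to h+1, every node receives at least as many seats as before. -/

import Mathlib

/-- A multi-level apportionment instance: a rooted tree on nodes `0, …, n`
(root `0`, encoded by a parent function with `parent i < i` for `i ≠ 0`),
together with entitlements `W`. -/
structure MLA where
  n : ℕ
  parent : Fin (n + 1) → Fin (n + 1)
  parent_lt : ∀ i : Fin (n + 1), i ≠ 0 → (parent i : ℕ) < (i : ℕ)
  W : Fin (n + 1) → ℝ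
  W_pos : ∀ i, 0 < W i
  W_le_one : ∀ i, W i ≤ 1
  W_root : W 0 = 1
  W_sum : ∀ i : Fin (n + 1),
    (Finset.univ.filter (fun c => c ≠ 0 ∧ parent c = i)).Nonempty →
    ∑ c ∈ Finset.univ.filter (fun c => c ≠ 0 ∧ parent c = i), W c = 1

namespace MLA

variable (T : MLA)

/-- The set of children of node `i`. -/
def children (i : Fin (T.n + 1)) : Finset (Fin (T.n + 1)) :=
  Finset.univ.filter (fun c => c ≠ 0 ∧ T.parent c = i)

/-- The ancestor set `A(i)`: `A(0) = {0}` and `A(i) = {parent i} ∪ A(parent i)`. -/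
def ancestors (i : Fin (T.n + 1)) : Finset (Fin (T.n + 1)) :=
  if h : i = 0 then {0} else insert (T.parent i) (ancestors (T.parent i))
termination_by (i : ℕ)
decreasing_by exact T.parent_lt i h

/-- The entitlement of node `i` relative to the root: `R i = ∏_{a ∈ A(i) ∪ {i}} W a`. -/
def R (i : Fin (T.n + 1)) : ℝ := ∏ a ∈ insert i (T.ancestors i), T.W a

/-- `V` is an allocation of `h` seats. -/
def IsAlloc (h : ℕ) (V : Fin (T.n + 1) → ℕ) : Prop :=
  V 0 = h ∧ ∀ i, (T.children i).Nonempty → V i = ∑ c ∈ T.children i, V c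

/-- `V` fulfills lower quota: `V i ≥ LQ i = max_{a ∈ A(i)} ⌊(R i / R a) · V a⌋`. -/
def FulfillsLowerQuota (V : Fin (T.n + 1) → ℕ) : Prop :=
  ∀ i, ∀ a ∈ T.ancestors i, ⌊T.R i / T.R a * (V a : ℝ)⌋ ≤ (V i : ℤ)

/-- `V` fulfills upper quota: `V i ≤ UQ i = min_{a ∈ A(i)} ⌈(R i / R a) · V a⌉`. -/
def FulfillsUpperQuota (V : Fin (T.n + 1) → ℕ) : Prop :=
  ∀ i, ∀ a ∈ T.ancestors i, (V i : ℤ) ≤ ⌈T.R i / T.R a * (V a : ℝ)⌉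


/-- `P` is the set of nodes receiving the new seat in one step of an iterative
method with selection criterion `crit` (to be minimized among children) and
eligibility constraint `elig`: `P` is a root-to-leaf path, each non-root node on
the path is an eligible child of its parent minimizing `crit` among all eligible
children, and the seat counts along `P` each increase by one. -/
def IsStepWith (crit : (Fin (T.n + 1) → ℕ) → Fin (T.n + 1) → ℝ)
    (elig : (Fin (T.n + 1) → ℕ) → Fin (T.n + 1) → Prop)
    (P : Finset (Fin (T.n + 1))) (Vh Vh1 : Fin (T.n + 1) → ℕ) : Prop :=
  (0 : Fin (T.n + 1)) ∈ P ∧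
  (∀ i ∈ P, i ≠ 0 → T.parent i ∈ P) ∧
  (∀ i ∈ P, (T.children i).Nonempty → ∃ c ∈ T.children i, c ∈ P) ∧
  (∀ c ∈ P, ∀ d ∈ P, c ≠ 0 → d ≠ 0 → T.parent c = T.parent d → c = d) ∧
  (∀ c ∈ P, c ≠ 0 → elig Vh c ∧
    ∀ d ∈ T.children (T.parent c), elig Vh d → crit Vh c ≤ crit Vh d) ∧
  (∀ i, Vh1 i = Vh i + if i ∈ P then 1 else 0)

/-- `V : ℕ → (nodes → ℕ)` is a run of the iterative method given by `crit` and
`elig` (with arbitrary tie-breaking): `V 0` is the all-zero allocation and each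
`V (h+1)` is obtained from `V h` by allocating one more seat along a path. -/
def IsRun (crit : (Fin (T.n + 1) → ℕ) → Fin (T.n + 1) → ℝ)
    (elig : (Fin (T.n + 1) → ℕ) → Fin (T.n + 1) → Prop)
    (V : ℕ → Fin (T.n + 1) → ℕ) : Prop :=
  (∀ i, V 0 i = 0) ∧ ∀ h, ∃ P, T.IsStepWith crit elig P (V h) (V (h + 1))

/-- Adams' criterion: a child `c` minimizing `V c / R c` receives the seat. -/
noncomputable def adamsCrit (V : Fin (T.n + 1) → ℕ) (c : Fin (T.n + 1)) : ℝ :=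
  (V c : ℝ) / T.R c

/-- Jefferson's criterion: a child `c` minimizing `(V c + 1) / R c` receives the seat. -/
noncomputable def jeffersonCrit (V : Fin (T.n + 1) → ℕ) (c : Fin (T.n + 1)) : ℝ :=
  ((V c : ℝ) + 1) / T.R c

/-- Trivial eligibility constraint: every child is eligible. -/
def trivElig (_ : Fin (T.n + 1) → ℕ) (_ : Fin (T.n + 1)) : Prop := True

/-- Eligibility constraint of the quota method: `V c / W c < V (parent c) + 1`. -/
def quotaElig (V : Fin (T.n + 1) → ℕ) (c : Fin (T.n + 1)) : Prop :=
  (V c : ℝ) / T.W c < (V (T.parent c) : ℝ) + 1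

/-- Eligibility constraint of the upper-compliant quota method:
`V c / R c < (V a + 1) / R a` for every ancestor `a` of `c`. -/
def ucElig (V : Fin (T.n + 1) → ℕ) (c : Fin (T.n + 1)) : Prop :=
  ∀ a ∈ T.ancestors c, (V c : ℝ) / T.R c < ((V a : ℝ) + 1) / T.R a

end MLA

namespace MLA

lemma ancestors_ne (T : MLA) (i : Fin (T.n + 1)) (h : i ≠ 0) :
    T.ancestors i = insert (T.parent i) (T.ancestors (T.parent i)) := by
  rw [ancestors, dif_neg h]

lemma ancestors_root (T : MLA) : T.ancestors 0 = {0} := by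
  rw [ancestors, dif_pos rfl]

/-- Induction along the tree, from the root downwards. -/
lemma tree_induction (T : MLA) (p : Fin (T.n + 1) → Prop) (h0 : p 0)
    (hs : ∀ i, i ≠ 0 → p (T.parent i) → p i) : ∀ i, p i := by
  have key : ∀ k : ℕ, ∀ i : Fin (T.n + 1), (i : ℕ) = k → p i := by
    intro k
    induction k using Nat.strong_induction_on with
    | _ k ih =>
      intro i hi
      by_cases h : i = 0
      · rw [h]; exact h0
      · exact hs i h (ih _ (hi ▸ T.parent_lt i h) _ rfl)
  exact fun i => key _ i rfl

lemma ancestors_le (T : MLA) : ∀ i, ∀ a ∈ T.ancestors i, (a : ℕ) ≤ (i : ℕ) := by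
  apply T.tree_induction
  · intro a ha
    rw [ancestors_root, Finset.mem_singleton] at ha
    rw [ha]
  · intro i hi ih a ha
    rw [T.ancestors_ne i hi, Finset.mem_insert] at ha
    have := T.parent_lt i hi
    rcases ha with rfl | ha
    · omega
    · have := ih a ha
      omega

lemma R_pos (T : MLA) (i : Fin (T.n + 1)) : 0 < T.R i :=
  Finset.prod_pos fun a _ => T.W_pos a

lemma R_child (T : MLA) (c : Fin (T.n + 1)) (hc : c ≠ 0) :
    T.R c = T.W c * T.R (T.parent c) := by
  have hlt := T.parent_lt c hc
  have hn : c ∉ insert (T.parent c) (T.ancestors (T.parent c)) := by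
    intro h
    rw [Finset.mem_insert] at h
    rcases h with h | h
    · rw [← h] at hlt; omega
    · have := T.ancestors_le _ _ h
      omega
  unfold R
  rw [T.ancestors_ne c hc, Finset.prod_insert hn]

lemma mem_children (T : MLA) (i c : Fin (T.n + 1)) :
    c ∈ T.children i ↔ c ≠ 0 ∧ T.parent c = i := by
  simp [children]

lemma R_sum (T : MLA) (i : Fin (T.n + 1)) (h : (T.children i).Nonempty) :
    ∑ c ∈ T.children i, T.R c = T.R i := by
  have h1 : ∑ c ∈ T.children i, T.R c = ∑ c ∈ T.children i, T.W c * T.R i := by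
    refine Finset.sum_congr rfl fun c hc => ?_
    rw [mem_children] at hc
    rw [T.R_child c hc.1, hc.2]
  have h2 : ∑ c ∈ T.children i, T.W c = 1 := T.W_sum i h
  rw [h1, ← Finset.sum_mul, h2, one_mul]

lemma run_sum (T : MLA) (V : ℕ → Fin (T.n + 1) → ℕ)
    (hrun : T.IsRun T.jeffersonCrit T.trivElig V) (h : ℕ) (i : Fin (T.n + 1))
    (hi : (T.children i).Nonempty) : V h i = ∑ c ∈ T.children i, V h c := by
  induction h with
  | zero => simp [hrun.1]
  | succ h ih =>
    obtain ⟨P, -, hpar, hch, huniq, -, hV⟩ := hrun.2 h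
    simp only [hV, Finset.sum_add_distrib, ← ih]
    congr 1
    by_cases hiP : i ∈ P
    · obtain ⟨c, hc, hcP⟩ := hch i hiP hi
      rw [if_pos hiP, Finset.sum_eq_single_of_mem c hc, if_pos hcP]
      intro d hd hdc
      rw [if_neg]
      intro hdP
      rw [mem_children] at hc hd
      exact hdc (huniq d hdP c hcP hd.1 hc.1 (hd.2.trans hc.2.symm))
    · rw [if_neg hiP, Finset.sum_eq_zero]
      intro d hd
      rw [if_neg]
      intro hdP
      rw [mem_children] at hd
      exact hiP (hd.2 ▸ hpar d hdP hd.1)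

lemma run_mono (T : MLA) (V : ℕ → Fin (T.n + 1) → ℕ)
    (hrun : T.IsRun T.jeffersonCrit T.trivElig V) (h : ℕ) (i : Fin (T.n + 1)) :
    V h i ≤ V (h + 1) i := by
  obtain ⟨P, -, -, -, -, -, hV⟩ := hrun.2 h
  rw [hV]
  exact Nat.le_add_right _ _

/-- Jefferson's invariant between siblings. -/
lemma run_sibling (T : MLA) (V : ℕ → Fin (T.n + 1) → ℕ)
    (hrun : T.IsRun T.jeffersonCrit T.trivElig V) (h : ℕ) (i c d : Fin (T.n + 1))
    (hc : c ∈ T.children i) (hd : d ∈ T.children i) :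
    (V h d : ℝ) / T.R d ≤ ((V h c : ℝ) + 1) / T.R c := by
  induction h with
  | zero =>
    have := T.R_pos c
    simp only [hrun.1]
    simp only [Nat.cast_zero, zero_div]
    positivity
  | succ h ih =>
    have hm : ((V h c : ℝ) + 1) / T.R c ≤ ((V (h + 1) c : ℝ) + 1) / T.R c := by
      have h1 : (V h c : ℝ) ≤ V (h + 1) c := by exact_mod_cast T.run_mono V hrun h c
      have := T.R_pos c
      gcongr
    refine le_trans ?_ hm
    obtain ⟨P, -, -, -, -, hmin, hV⟩ := hrun.2 h
    rw [hV]
    by_cases hdP : d ∈ P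
    · rw [if_pos hdP]
      rw [mem_children] at hd
      have := (hmin d hdP hd.1).2 c (hd.2 ▸ hc) trivial
      simpa [jeffersonCrit] using this
    · rw [if_neg hdP]
      simpa using ih

/-- `(V + 1) / R` is monotone down the tree. -/
lemma run_child (T : MLA) (V : ℕ → Fin (T.n + 1) → ℕ)
    (hrun : T.IsRun T.jeffersonCrit T.trivElig V) (h : ℕ) (c : Fin (T.n + 1)) (hc : c ≠ 0) :
    ((V h (T.parent c) : ℝ) + 1) / T.R (T.parent c) ≤ ((V h c : ℝ) + 1) / T.R c := by
  have hmem : c ∈ T.children (T.parent c) := (T.mem_children _ _).2 ⟨hc, rfl⟩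
  set p := T.parent c with hp
  set t := ((V h c : ℝ) + 1) / T.R c with ht
  have hcR := T.R_pos c
  have hsum : (V h p : ℝ) = ∑ d ∈ T.children p, (V h d : ℝ) := by
    exact_mod_cast T.run_sum V hrun h p ⟨c, hmem⟩
  have hle : ∑ d ∈ (T.children p).erase c, (V h d : ℝ)
      ≤ ∑ d ∈ (T.children p).erase c, t * T.R d := by
    refine Finset.sum_le_sum fun d hd => ?_
    have := T.run_sibling V hrun h p c d hmem (Finset.mem_of_mem_erase hd)
    exact (div_le_iff₀ (T.R_pos d)).1 this
  have htc : t * T.R c = V h c + 1 := by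
    rw [ht]; field_simp
  have hR : ∑ d ∈ T.children p, t * T.R d = t * T.R p := by
    rw [← Finset.mul_sum, T.R_sum p ⟨c, hmem⟩]
  rw [← Finset.add_sum_erase _ _ hmem] at hsum hR
  rw [div_le_iff₀ (T.R_pos p)]
  linarith

lemma run_ancestor (T : MLA) (V : ℕ → Fin (T.n + 1) → ℕ)
    (hrun : T.IsRun T.jeffersonCrit T.trivElig V) (h : ℕ) :
    ∀ i, ∀ a ∈ T.ancestors i,
      ((V h a : ℝ) + 1) / T.R a ≤ ((V h i : ℝ) + 1) / T.R i := by
  apply T.tree_induction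
  · intro a ha
    rw [ancestors_root, Finset.mem_singleton] at ha
    rw [ha]
  · intro i hi ih a ha
    rw [T.ancestors_ne i hi, Finset.mem_insert] at ha
    rcases ha with rfl | ha
    · exact T.run_child V hrun h i hi
    · exact (ih a ha).trans (T.run_child V hrun h i hi)

end MLA

/-- Any run of the multi-level Jefferson's method fulfills
lower quota after every number of seats, and satisfies house monotonicity. -/
theorem jefferson_lower_quota_and_house_monotone (T : MLA) (V : ℕ → Fin (T.n + 1) → ℕ)
    (hrun : T.IsRun T.jeffersonCrit T.trivElig V) :
    (∀ h : ℕ, T.FulfillsLowerQuota (V h)) ∧ (∀ h : ℕ, ∀ i, V h i ≤ V (h + 1) i) := by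
  refine ⟨fun h i a ha => ?_, T.run_mono V hrun⟩
  have key := T.run_ancestor V hrun h i a ha
  have hi := T.R_pos i
  have hapos := T.R_pos a
  have hlt : (V h a : ℝ) / T.R a < ((V h i : ℝ) + 1) / T.R i :=
    lt_of_lt_of_le (div_lt_div_of_pos_right (by linarith) hapos) key
  rw [lt_div_iff₀ hi] at hlt
  have : ⌊T.R i / T.R a * (V h a : ℝ)⌋ < (V h i : ℤ) + 1 := by
    rw [Int.floor_lt]
    push_cast
    calc T.R i / T.R a * (V h a : ℝ) = (V h a : ℝ) / T.R a * T.R i := by ring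
      _ < _ := hlt
  omega
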